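/- Let (Σ_A, σ) be a one-sided topological Markov shift over a finite alphabet, and ψ, φ continuous with ψ > 0. If μ is a σ-invariant Gibbs measure for ψ and φ (i.e., ∃ K > 1 with K⁻¹ ≤ μ(C_{i₁…i_n}) / exp[−S_nψ(ω)·P_ψ(φ) + S_nφ(ω)] ≤ K for all cylinders and ω in them), then μ is an equilibrium measure for ψ and φ: (h_μ(σ) + ∫φ dμ)/∫ψ dμ = P_ψ(φ). -/

import Mathlib

/-!
Taking logarithms, the Gibbs condition says that the information of the cylinder of length `n`
around `ω` differs from `P_ψ(φ) S_n ψ(ω) - S_n φ(ω)` by at most `log K`. Integrating and using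
invariance, the entropy of the partition into cylinders of length `n` is
`n (P_ψ(φ) ∫ ψ dμ - ∫ φ dμ) + O(1)`, so the entropy rate of that partition is
`P_ψ(φ) ∫ ψ dμ - ∫ φ dμ`. Since the cylinders generate, the Kolmogorov–Sinai theorem identifies this
number with `h_μ(σ)`. The induced pressure is an extended real; it is finite because a time `T`
allows only `O(T)` iterates, and the spanning sets grow at an exponential rate that does not depend
on the scale.

The Kolmogorov–Sinai theorem rests on Gibbs' inequality `H(b) ≤ E[-log G(b)]` for subprobability
vectors `G`. If a letter `q` is predicted from a word of the generator with error probability `δ`,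
let `G` put mass about `1 - δ` on the prediction and spread `δ` over the alphabet: the itineraries
of `q` then cost at most `guessCost δ` per letter more than those of the generator, and
`guessCost δ → 0`.
-/

open MeasureTheory Filter Topology Set

variable {X : Type*}

/-- Birkhoff sum `S_n φ (x) = ∑_{i<n} φ(f^i x)`. -/
noncomputable def birkhoff (f : X → X) (φ : X → ℝ) (n : ℕ) (x : X) : ℝ :=
  ∑ i ∈ Finset.range n, φ (f^[i] x)

/-- The `n`-th Bowen metric. -/
noncomputable def dynDist [MetricSpace X] (f : X → X) (n : ℕ) (x y : X) : ℝ :=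
  ⨆ i : Fin n, dist (f^[(i : ℕ)] x) (f^[(i : ℕ)] y)

/-- `F` is an `(n,ε)`-spanning set of `Z`. -/
def IsSpanningSet [MetricSpace X] (f : X → X) (n : ℕ) (ε : ℝ) (Z : Set X) (F : Finset X) : Prop :=
  ∀ y ∈ Z, ∃ x ∈ F, dynDist f n x y ≤ ε

/-- `E` is `(n,ε)`-separated. -/
def IsSeparatedSet [MetricSpace X] (f : X → X) (n : ℕ) (ε : ℝ) (E : Finset X) : Prop :=
  ∀ x ∈ E, ∀ y ∈ E, x ≠ y → ε < dynDist f n x y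

/-- `S_T = {n : ∃ x, S_n ψ(x) ≤ T < S_{n+1} ψ(x)}`. -/
def STset (f : X → X) (ψ : X → ℝ) (T : ℝ) : Set ℕ :=
  {n | ∃ x : X, birkhoff f ψ n x ≤ T ∧ T < birkhoff f ψ (n + 1) x}

/-- `X_n = {x : S_n ψ(x) ≤ T < S_{n+1} ψ(x)}`. -/
def Xset (f : X → X) (ψ : X → ℝ) (T : ℝ) (n : ℕ) : Set X :=
  {x | birkhoff f ψ n x ≤ T ∧ T < birkhoff f ψ (n + 1) x}

/-- `Q_{ψ,T}(f,φ,ε)`, the spanning-set quantity. -/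
noncomputable def Qspan [MetricSpace X] (f : X → X) (φ ψ : X → ℝ) (T ε : ℝ) : ℝ :=
  sInf { r : ℝ | ∃ F : ℕ → Finset X,
    (∀ n ∈ STset f ψ T, IsSpanningSet f n ε (Xset f ψ T n) (F n)) ∧
    r = ∑' n : ℕ, Set.indicator (STset f ψ T)
        (fun n => ∑ x ∈ F n, Real.exp (birkhoff f φ n x)) n }

/-- `P_{ψ,T}(f,φ,ε)`, the separated-set quantity. -/
noncomputable def Psep [MetricSpace X] (f : X → X) (φ ψ : X → ℝ) (T ε : ℝ) : ℝ :=
  sSup { r : ℝ | ∃ E : ℕ → Finset X,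
    (∀ n ∈ STset f ψ T, (E n : Set X) ⊆ Xset f ψ T n ∧ IsSeparatedSet f n ε (E n)) ∧
    r = ∑' n : ℕ, Set.indicator (STset f ψ T)
        (fun n => ∑ x ∈ E n, Real.exp (birkhoff f φ n x)) n }

/-- The `ψ`-induced topological pressure of `φ`. -/
noncomputable def inducedPressure [MetricSpace X] (f : X → X) (φ ψ : X → ℝ) : EReal :=
  ⨆ (ε : ℝ) (_ : 0 < ε),
    Filter.limsup (fun T : ℝ => ((T⁻¹ * Real.log (Qspan f φ ψ T ε) : ℝ) : EReal)) atTop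

/-- Largest sum over `(n,ε)`-separated sets of `X`. -/
noncomputable def sepSum [MetricSpace X] (f : X → X) (φ : X → ℝ) (n : ℕ) (ε : ℝ) : ℝ :=
  sSup { r : ℝ | ∃ E : Finset X, IsSeparatedSet f n ε E ∧
    r = ∑ x ∈ E, Real.exp (birkhoff f φ n x) }

/-- The classical (Walters) topological pressure. -/
noncomputable def topPressure [MetricSpace X] (f : X → X) (φ : X → ℝ) : EReal :=
  ⨆ (ε : ℝ) (_ : 0 < ε),
    Filter.limsup (fun n : ℕ => (((n : ℝ)⁻¹ * Real.log (sepSum f φ n ε) : ℝ) : EReal)) atTop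
/-- The cell of the dynamical refinement `⋁_{i<n} f^{-i} P` indexed by itinerary `w`. -/
noncomputable def cellOf (f : X → X) {k n : ℕ} (P : Fin k → Set X) (w : Fin n → Fin k) : Set X :=
  ⋂ i : Fin n, f^[(i : ℕ)] ⁻¹' P (w i)

/-- `P` is a finite measurable partition of `X`. -/
def IsMeasPartition [MeasurableSpace X] {k : ℕ} (P : Fin k → Set X) : Prop :=
  (∀ i, MeasurableSet (P i)) ∧ Pairwise (Function.onFun Disjoint P) ∧ (⋃ i, P i) = Set.univ

/-- Entropy `H(⋁_{i<n} f^{-i} P)` of the `n`-th dynamical refinement. -/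
noncomputable def partitionEntropy [MeasurableSpace X] (μ : Measure X) (f : X → X)
    {k : ℕ} (P : Fin k → Set X) (n : ℕ) : ℝ :=
  ∑ w : Fin n → Fin k, Real.negMulLog (μ (cellOf f P w)).toReal

/-- Kolmogorov–Sinai (measure-theoretic) entropy `h_μ(f)`. -/
noncomputable def ksEntropy [MeasurableSpace X] (μ : Measure X) (f : X → X) : EReal :=
  ⨆ (k : ℕ) (P : Fin k → Set X) (_ : IsMeasPartition P),
    ⨅ n : ℕ, ((((n : ℝ) + 1)⁻¹ * partitionEntropy μ f P (n + 1) : ℝ) : EReal)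

/-- `μ` is an equilibrium measure for `ψ` and `φ`:
`(h_μ(f) + ∫ φ dμ) / ∫ ψ dμ = P_ψ(φ)` (written multiplicatively in `EReal`). -/
noncomputable def IsEquilibriumMeasure [MetricSpace X] [MeasurableSpace X]
    (f : X → X) (φ ψ : X → ℝ) (μ : Measure X) : Prop :=
  (ksEntropy μ f + ((∫ x, φ x ∂μ : ℝ) : EReal)) * (((∫ x, ψ x ∂μ)⁻¹ : ℝ) : EReal)
    = inducedPressure f φ ψ

/-! ### One-sided topological Markov shifts over a finite alphabet -/

attribute [local instance] PiNat.metricSpace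

/-- The one-sided topological Markov shift `Σ_A` determined by the 0-1 transition
matrix `A` over the alphabet `Fin k`, with the metric `dist ω ω' = (1/2)^{|ω ∧ ω'|}`. -/
def SigmaA {k : ℕ} (A : Fin k → Fin k → Bool) : Type :=
  {ω : ℕ → Fin k // ∀ n : ℕ, A (ω n) (ω (n + 1)) = true}

noncomputable instance {k : ℕ} (A : Fin k → Fin k → Bool) : MetricSpace (SigmaA A) :=
  Subtype.metricSpace

noncomputable instance {k : ℕ} (A : Fin k → Fin k → Bool) : MeasurableSpace (SigmaA A) :=
  borel _

/-- The shift map `σ : Σ_A → Σ_A`. -/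
def shiftMap {k : ℕ} (A : Fin k → Fin k → Bool) : SigmaA A → SigmaA A :=
  fun ω => ⟨fun n => ω.1 (n + 1), fun n => ω.2 (n + 1)⟩

/-- The cylinder set `C_{w₀ … w_{n-1}}`. -/
def cylinderSet {k : ℕ} (A : Fin k → Fin k → Bool) {n : ℕ} (w : Fin n → Fin k) :
    Set (SigmaA A) :=
  {ω | ∀ i : Fin n, ω.1 (i : ℕ) = w i}

/-- `μ` is a Gibbs measure for `ψ` and `φ` with constant `K`:
`K⁻¹ ≤ μ(C_{i₁…i_n}) / exp[-S_nψ(ω)·P_ψ(φ) + S_nφ(ω)] ≤ K` on every cylinder. -/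
def IsGibbsMeasure {k : ℕ} (A : Fin k → Fin k → Bool) (φ ψ : SigmaA A → ℝ)
    (μ : Measure (SigmaA A)) (K : ℝ) : Prop :=
  ∀ (n : ℕ) (w : Fin n → Fin k), ∀ ω ∈ cylinderSet A w,
    K⁻¹ ≤ (μ (cylinderSet A w)).toReal /
        Real.exp (-(birkhoff (shiftMap A) ψ n ω) * (inducedPressure (shiftMap A) φ ψ).toReal
          + birkhoff (shiftMap A) φ n ω) ∧
    (μ (cylinderSet A w)).toReal /
        Real.exp (-(birkhoff (shiftMap A) ψ n ω) * (inducedPressure (shiftMap A) φ ψ).toReal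
          + birkhoff (shiftMap A) φ n ω) ≤ K

section FiniteValued

variable [MeasurableSpace X] {μ : Measure X} [IsFiniteMeasure μ]
  {β γ : Type*}

/-- The information function `-log μ(b = b x)` of the partition of `X` into the fibres of `b`. On
null fibres it takes the junk value `-log 0 = 0`. -/
noncomputable def information (μ : Measure X) (b : X → β) (x : X) : ℝ :=
  -Real.log (μ.real (b ⁻¹' {b x}))

/-- The Shannon entropy of the distribution of a finite-valued map `b`, i.e. of the partition of
`X` into the fibres of `b`. -/
noncomputable def shannonEntropy [Fintype β] (μ : Measure X) (b : X → β) : ℝ :=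
  ∑ v, Real.negMulLog (μ.real (b ⁻¹' {v}))

theorem ae_measureReal_fiber_pos [Finite β] (b : X → β) :
    ∀ᵐ x ∂μ, 0 < μ.real (b ⁻¹' {b x}) := by
  have h : ∀ v, ∀ᵐ x ∂μ, b x = v → 0 < μ.real (b ⁻¹' {v}) := by
    intro v
    rcases (measureReal_nonneg (μ := μ) (s := b ⁻¹' {v})).eq_or_lt' with h0 | h0
    · have hnull : ∀ᵐ x ∂μ, x ∉ b ⁻¹' {v} := measure_eq_zero_iff_ae_notMem.mp
        ((measureReal_eq_zero_iff (μ := μ)).mp h0)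
      filter_upwards [hnull] with x hx hxv using absurd hxv hx
    · exact .of_forall fun _ _ => h0
  filter_upwards [ae_all_iff.mpr h] with x hx using hx _ rfl

variable [MeasurableSpace β] [MeasurableSingletonClass β]
  [MeasurableSpace γ] [MeasurableSingletonClass γ]

theorem integrable_comp_of_finite [Finite β] {b : X → β} (hb : Measurable b) (F : β → ℝ) :
    Integrable (fun x => F (b x)) μ :=
  Integrable.comp_measurable (g := F) Integrable.of_finite hb

theorem integrable_information [Finite β] {b : X → β} (hb : Measurable b) :
    Integrable (information μ b) μ :=
  integrable_comp_of_finite hb fun v => -Real.log (μ.real (b ⁻¹' {v}))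

variable [Fintype β] [Fintype γ]

theorem integral_comp_eq_sum {b : X → β} (hb : Measurable b) (F : β → ℝ) :
    ∫ x, F (b x) ∂μ = ∑ v, μ.real (b ⁻¹' {v}) * F v := by
  rw [← integral_map hb.aemeasurable (measurable_of_finite F).aestronglyMeasurable,
    integral_fintype Integrable.of_finite]
  simp only [map_measureReal_apply hb (measurableSet_singleton _), smul_eq_mul]

theorem integral_information {b : X → β} (hb : Measurable b) :
    ∫ x, information μ b x ∂μ = shannonEntropy μ b := by
  simp only [information, shannonEntropy, Real.negMulLog]
  rw [integral_comp_eq_sum hb fun v => -Real.log (μ.real (b ⁻¹' {v}))]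
  simp only [mul_neg, neg_mul]

theorem shannonEntropy_comp_le {b : X → β} (hb : Measurable b) (u : β → γ) :
    shannonEntropy μ (fun x => u (b x)) ≤ shannonEntropy μ b := by
  have hub : Measurable fun x => u (b x) := (measurable_of_finite u).comp hb
  rw [← integral_information hb, ← integral_information hub]
  refine integral_mono_ae (integrable_information hub) (integrable_information hb) ?_
  filter_upwards [ae_measureReal_fiber_pos b] with x hx
  exact neg_le_neg (Real.log_le_log hx (measureReal_mono fun y hy => congrArg u hy))

end FiniteValued

section Gibbs

variable [MeasurableSpace X] {μ : Measure X} [IsProbabilityMeasure μ]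
  {β γ : Type*} [Fintype β] [Fintype γ]

theorem shannonEntropy_nonneg (b : X → β) : 0 ≤ shannonEntropy μ b :=
  Finset.sum_nonneg fun _ _ => Real.negMulLog_nonneg measureReal_nonneg measureReal_le_one

variable [MeasurableSpace β] [MeasurableSingletonClass β]
  [MeasurableSpace γ] [MeasurableSingletonClass γ]

theorem sum_measureReal_fiber {b : X → β} (hb : Measurable b) :
    ∑ v, μ.real (b ⁻¹' {v}) = 1 := by
  simpa using (integral_comp_eq_sum (μ := μ) hb fun _ => 1).symm

theorem shannonEntropy_le_integral_neg_log {b : X → β} (hb : Measurable b) {G : β → ℝ}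
    (hG0 : ∀ v, 0 ≤ G v) (hG : ∀ᵐ x ∂μ, 0 < G (b x)) (hG1 : ∑ v, G v ≤ 1) :
    shannonEntropy μ b ≤ ∫ x, -Real.log (G (b x)) ∂μ := by
  set p : β → ℝ := fun v => μ.real (b ⁻¹' {v})
  have hlog : Integrable (fun x => -Real.log (G (b x))) μ :=
    integrable_comp_of_finite hb fun v => -Real.log (G v)
  have hratio : Integrable (fun x => G (b x) / p (b x)) μ :=
    integrable_comp_of_finite hb fun v => G v / p v
  have hexcess : Integrable (fun x => G (b x) / p (b x) - 1) μ :=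
    hratio.sub (integrable_const 1)
  have hpoint : ∀ᵐ x ∂μ,
      information μ b x ≤ -Real.log (G (b x)) + (G (b x) / p (b x) - 1) := by
    filter_upwards [ae_measureReal_fiber_pos b, hG] with x hp hGx
    have h := Real.log_le_sub_one_of_pos (div_pos hGx hp)
    rw [Real.log_div hGx.ne' hp.ne'] at h
    simp only [information]
    linarith
  have hmass : ∫ x, G (b x) / p (b x) ∂μ ≤ 1 := by
    rw [integral_comp_eq_sum hb fun v => G v / p v]
    refine (Finset.sum_le_sum fun v _ => ?_).trans hG1
    rcases eq_or_ne (p v) 0 with h | h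
    · exact (mul_eq_zero_of_left h _).trans_le (hG0 v)
    · exact (mul_div_cancel₀ (G v) h).le
  calc shannonEntropy μ b
      = ∫ x, information μ b x ∂μ := (integral_information hb).symm
    _ ≤ ∫ x, -Real.log (G (b x)) + (G (b x) / p (b x) - 1) ∂μ :=
        integral_mono_ae (integrable_information hb)
          (hlog.add hexcess) hpoint
    _ = ∫ x, -Real.log (G (b x)) ∂μ + (∫ x, G (b x) / p (b x) ∂μ - 1) := by
        rw [integral_add hlog hexcess, integral_sub hratio (integrable_const 1)]
        simp only [integral_const, probReal_univ, smul_eq_mul, mul_one]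
    _ ≤ ∫ x, -Real.log (G (b x)) ∂μ := by linarith

theorem shannonEntropy_prodMk_le {b : X → β} {c : X → γ} (hb : Measurable b)
    (hc : Measurable c) :
    shannonEntropy μ (fun x => (b x, c x)) ≤ shannonEntropy μ b + shannonEntropy μ c := by
  have hsum : ∑ v : β × γ, μ.real (b ⁻¹' {v.1}) * μ.real (c ⁻¹' {v.2}) ≤ 1 := by
    rw [Fintype.sum_prod_type]
    simp only [← Finset.mul_sum, sum_measureReal_fiber hb, sum_measureReal_fiber hc, mul_one,
      le_refl]
  have hpos : ∀ᵐ x ∂μ, 0 < μ.real (b ⁻¹' {b x}) * μ.real (c ⁻¹' {c x}) := by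
    filter_upwards [ae_measureReal_fiber_pos b, ae_measureReal_fiber_pos c] with x h₁ h₂
      using mul_pos h₁ h₂
  refine (shannonEntropy_le_integral_neg_log (hb.prodMk hc)
    (G := fun v : β × γ => μ.real (b ⁻¹' {v.1}) * μ.real (c ⁻¹' {v.2}))
    (fun v => mul_nonneg measureReal_nonneg measureReal_nonneg) hpos hsum).trans_eq ?_
  rw [← integral_information hb, ← integral_information hc,
    ← integral_add (integrable_information hb) (integrable_information hc)]
  refine integral_congr_ae ?_
  filter_upwards [ae_measureReal_fiber_pos b, ae_measureReal_fiber_pos c] with x h₁ h₂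
  simp only [information, Real.log_mul h₁.ne' h₂.ne', neg_add]

/-- Gibbs' inequality for the joint distribution of `(b, c)` against the weights
`μ(c = w) * κ w v`. -/
theorem shannonEntropy_le_add_integral_neg_log {b : X → β} {c : X → γ} (hb : Measurable b)
    (hc : Measurable c) {κ : γ → β → ℝ} (hκ0 : ∀ w v, 0 < κ w v) (hκ1 : ∀ w, ∑ v, κ w v ≤ 1) :
    shannonEntropy μ b ≤ shannonEntropy μ c + ∫ x, -Real.log (κ (c x) (b x)) ∂μ := by
  have hbc : Measurable fun x => (b x, c x) := hb.prodMk hc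
  have hsum : ∑ v : β × γ, μ.real (c ⁻¹' {v.2}) * κ v.2 v.1 ≤ 1 := by
    rw [Fintype.sum_prod_type_right, ← sum_measureReal_fiber (μ := μ) hc]
    simp only [← Finset.mul_sum]
    exact Finset.sum_le_sum fun w _ => mul_le_of_le_one_right measureReal_nonneg (hκ1 w)
  have hpos : ∀ᵐ x ∂μ, 0 < μ.real (c ⁻¹' {c x}) * κ (c x) (b x) := by
    filter_upwards [ae_measureReal_fiber_pos c] with x hx using mul_pos hx (hκ0 _ _)
  refine (shannonEntropy_comp_le hbc Prod.fst).trans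
    ((shannonEntropy_le_integral_neg_log hbc
      (G := fun v : β × γ => μ.real (c ⁻¹' {v.2}) * κ v.2 v.1)
      (fun v => mul_nonneg measureReal_nonneg (hκ0 v.2 v.1).le) hpos hsum).trans_eq ?_)
  rw [← integral_information hc, ← integral_add (integrable_information hc)
    (integrable_comp_of_finite hbc fun v => -Real.log (κ v.2 v.1))]
  refine integral_congr_ae ?_
  filter_upwards [ae_measureReal_fiber_pos c] with x hx
  simp only [information, Real.log_mul hx.ne' (hκ0 _ _).ne', neg_add]

end Gibbs

section Guessing

variable [MeasurableSpace X] {μ : Measure X} [IsProbabilityMeasure μ]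
  {β : Type*} [Fintype β] [DecidableEq β]

/-- The probability of the value `v` when the value `v'` has been guessed: mass `1 - δ` is put on
the guess and `δ` is spread uniformly, so that no value has probability zero. -/
noncomputable def guessWeight (δ : ℝ) (v' v : β) : ℝ :=
  (if v = v' then 1 - δ else 0) + δ / Fintype.card β

/-- An upper bound for the cost of encoding a value in a set of size `l` by means of a guess that
fails with probability at most `δ`, as in Fano's inequality. -/
noncomputable def guessCost (l : ℕ) (δ : ℝ) : ℝ :=
  -Real.log (1 - δ) + (Real.negMulLog δ + δ * Real.log l)

theorem guessWeight_pos [Nonempty β] {δ : ℝ} (hδ : 0 < δ) (hδ1 : δ < 1) (v' v : β) :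
    0 < guessWeight δ v' v := by
  have : 0 < δ / Fintype.card β := by positivity
  unfold guessWeight
  split_ifs <;> linarith

theorem sum_guessWeight [Nonempty β] (δ : ℝ) (v' : β) : ∑ v, guessWeight δ v' v = 1 := by
  simp only [guessWeight, Finset.sum_add_distrib, Finset.sum_ite_eq', Finset.mem_univ, if_true,
    Finset.sum_const, Finset.card_univ, nsmul_eq_mul]
  field_simp
  ring

theorem sum_prod_guessWeight {ι : Type*} [Fintype ι] [DecidableEq ι] [Nonempty β] (δ : ℝ)
    (v' : ι → β) : ∑ v : ι → β, ∏ i, guessWeight δ (v' i) (v i) = 1 := by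
  rw [← Fintype.piFinset_univ,
    ← Finset.prod_univ_sum (fun _ => Finset.univ) fun i v => guessWeight δ (v' i) v]
  simp only [sum_guessWeight, Finset.prod_const_one]

variable [MeasurableSpace β] [MeasurableSingletonClass β]

theorem integral_neg_log_guessWeight_le {q r : X → β} (hq : Measurable q)
    (hr : Measurable r) {δ : ℝ} (hδ : 0 < δ) (hδ1 : δ < 1) (hqr : μ.real {x | q x ≠ r x} ≤ δ) :
    ∫ x, -Real.log (guessWeight δ (r x) (q x)) ∂μ ≤ guessCost (Fintype.card β) δ := by
  have : Nonempty β := (nonempty_of_isProbabilityMeasure μ).map q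
  have hl : (1 : ℝ) ≤ Fintype.card β := by exact_mod_cast Fintype.card_pos (α := β)
  have hδl : 0 < δ / Fintype.card β := by positivity
  have hpenalty : 0 ≤ -Real.log (δ / Fintype.card β) :=
    neg_nonneg.mpr (Real.log_nonpos hδl.le (div_le_one_of_le₀ (by linarith) (by linarith)))
  have hbad : MeasurableSet {x | q x ≠ r x} := (measurableSet_eq_fun hq hr).compl
  have hindicator : Integrable ({x | q x ≠ r x}.indicator
      fun _ => -Real.log (δ / Fintype.card β)) μ := (integrable_const _).indicator hbad
  have hpoint : ∀ x, -Real.log (guessWeight δ (r x) (q x)) ≤ -Real.log (1 - δ) +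
      {x | q x ≠ r x}.indicator (fun _ => -Real.log (δ / Fintype.card β)) x := by
    intro x
    by_cases hx : q x = r x
    · rw [indicator_of_notMem (not_not_intro hx), add_zero, guessWeight, if_pos hx]
      exact neg_le_neg (Real.log_le_log (by linarith) (by linarith))
    · rw [indicator_of_mem (show x ∈ {x | q x ≠ r x} from hx), guessWeight, if_neg hx, zero_add]
      linarith [Real.log_nonpos (by linarith : 0 ≤ 1 - δ) (by linarith)]
  calc ∫ x, -Real.log (guessWeight δ (r x) (q x)) ∂μ
      ≤ ∫ x, -Real.log (1 - δ) +
          {x | q x ≠ r x}.indicator (fun _ => -Real.log (δ / Fintype.card β)) x ∂μ :=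
        integral_mono (integrable_comp_of_finite (hr.prodMk hq)
          fun v : β × β => -Real.log (guessWeight δ v.1 v.2))
          ((integrable_const _).add hindicator) hpoint
    _ = -Real.log (1 - δ) + μ.real {x | q x ≠ r x} * -Real.log (δ / Fintype.card β) := by
        rw [integral_add (integrable_const _) hindicator, integral_indicator_const _ hbad]
        simp only [integral_const, probReal_univ, smul_eq_mul, one_mul]
    _ ≤ -Real.log (1 - δ) + δ * -Real.log (δ / Fintype.card β) := by gcongr
    _ = guessCost (Fintype.card β) δ := by
        rw [guessCost, Real.log_div hδ.ne' (by positivity), Real.negMulLog]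
        ring

theorem tendsto_guessCost (l : ℕ) : Tendsto (guessCost l) (𝓝[>] 0) (𝓝 0) := by
  have hcont : ContinuousAt (guessCost l) 0 :=
    (ContinuousAt.log (by fun_prop) (by simp)).neg.add
      (Real.continuous_negMulLog.continuousAt.add (by fun_prop))
  simpa [guessCost] using hcont.tendsto.mono_left nhdsWithin_le_nhds

end Guessing

section Invariance

variable [MeasurableSpace X] {μ : Measure X} {f : X → X}

theorem integrable_comp_iterate (hf : MeasurePreserving f μ μ) {F : X → ℝ} (hF : Integrable F μ)
    (i : ℕ) : Integrable (fun x => F (f^[i] x)) μ :=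
  (hf.iterate i).integrable_comp_of_integrable hF

theorem integral_comp_iterate (hf : MeasurePreserving f μ μ) {F : X → ℝ} (hF : Integrable F μ)
    (i : ℕ) : ∫ x, F (f^[i] x) ∂μ = ∫ x, F x ∂μ := by
  have h := hf.iterate i
  rw [← integral_map h.aemeasurable (h.map_eq.symm ▸ hF.1), h.map_eq]

theorem integrable_birkhoff (hf : MeasurePreserving f μ μ) {F : X → ℝ} (hF : Integrable F μ)
    (n : ℕ) : Integrable (birkhoff f F n) μ :=
  integrable_finsetSum _ fun i _ => integrable_comp_iterate hf hF i

theorem integral_birkhoff (hf : MeasurePreserving f μ μ) {F : X → ℝ} (hF : Integrable F μ)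
    (n : ℕ) : ∫ x, birkhoff f F n x ∂μ = n * ∫ x, F x ∂μ := by
  simp only [birkhoff]
  rw [integral_finsetSum _ fun i _ => integrable_comp_iterate hf hF i]
  simp only [integral_comp_iterate hf hF, Finset.sum_const, Finset.card_range, nsmul_eq_mul]

theorem shannonEntropy_comp_of_measurePreserving {β : Type*} [Fintype β] [MeasurableSpace β]
    [MeasurableSingletonClass β] (hf : MeasurePreserving f μ μ) {b : X → β} (hb : Measurable b) :
    shannonEntropy μ (fun x => b (f x)) = shannonEntropy μ b :=
  Finset.sum_congr rfl fun v _ => congrArg Real.negMulLog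
    (hf.measureReal_preimage (hb (measurableSet_singleton v)).nullMeasurableSet)

end Invariance

section Itinerary

variable {α β : Type*} {f : X → X} {a : X → α}

/-- The word of length `n` that an orbit of `f` spells in the labelling `a` of the phase space. Its
fibres are the cells of the refinement `⋁_{i<n} f^{-i} P`, where `P` is the partition into the
fibres of `a`. -/
def itinerary (f : X → X) (a : X → α) (n : ℕ) (x : X) : Fin n → α :=
  fun i => a (f^[i] x)

theorem itinerary_add (m n : ℕ) (x : X) :
    itinerary f a (m + n) x = Fin.append (itinerary f a m x) (itinerary f a n (f^[m] x)) := by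
  funext i
  refine Fin.addCases (fun j => ?_) (fun j => ?_) i
  · simp only [itinerary, Fin.append_left, Fin.val_castAdd]
  · simp only [itinerary, Fin.append_right, Fin.val_natAdd, add_comm m,
      Function.iterate_add_apply]

theorem itinerary_iterate {n M i : ℕ} (hi : i + M ≤ n) (x : X) :
    itinerary f a M (f^[i] x) = fun t : Fin M => itinerary f a n x ⟨i + t, by omega⟩ := by
  funext t
  simp only [itinerary, add_comm i, Function.iterate_add_apply]

variable [MeasurableSpace X] [MeasurableSpace α] [MeasurableSpace β]

theorem measurable_itinerary (hf : Measurable f) (ha : Measurable a) (n : ℕ) :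
    Measurable (itinerary f a n) :=
  measurable_pi_lambda _ fun i => ha.comp (hf.iterate i)

variable {μ : Measure X} [IsProbabilityMeasure μ] [Fintype α] [MeasurableSingletonClass α]

theorem subadditive_shannonEntropy_itinerary (hf : MeasurePreserving f μ μ) (ha : Measurable a) :
    Subadditive fun n => shannonEntropy μ (itinerary f a n) := by
  intro m n
  have hm := measurable_itinerary hf.measurable ha m
  have hn := measurable_itinerary hf.measurable ha n
  have hn' := hn.comp (hf.iterate m).measurable
  calc shannonEntropy μ (itinerary f a (m + n))
      = shannonEntropy μ fun x => Fin.append (itinerary f a m x) (itinerary f a n (f^[m] x)) :=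
        congrArg (shannonEntropy μ) (funext (itinerary_add m n))
    _ ≤ shannonEntropy μ fun x => (itinerary f a m x, itinerary f a n (f^[m] x)) :=
        shannonEntropy_comp_le (hm.prodMk hn') fun v => Fin.append v.1 v.2
    _ ≤ shannonEntropy μ (itinerary f a m) +
          shannonEntropy μ fun x => itinerary f a n (f^[m] x) := shannonEntropy_prodMk_le hm hn'
    _ = shannonEntropy μ (itinerary f a m) + shannonEntropy μ (itinerary f a n) := by
        rw [shannonEntropy_comp_of_measurePreserving (hf.iterate m) hn]

variable [Fintype β] [MeasurableSingletonClass β]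

/-- Fano's inequality along orbits: the letter `q (f^[i] x)` is guessed from the letters
`i, …, i + M - 1` of the itinerary of `x`. -/
theorem shannonEntropy_itinerary_le (hf : MeasurePreserving f μ μ) (ha : Measurable a)
    {q : X → β} (hq : Measurable q) {δ : ℝ} (hδ : 0 < δ) (hδ1 : δ < 1) {M : ℕ}
    {g : (Fin M → α) → β} (hg : μ.real {x | q x ≠ g (itinerary f a M x)} ≤ δ) (n : ℕ) :
    shannonEntropy μ (itinerary f q n) ≤
      shannonEntropy μ (itinerary f a (n + M)) + n * guessCost (Fintype.card β) δ := by
  classical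
  have : Nonempty β := (nonempty_of_isProbabilityMeasure μ).map q
  have hr : Measurable fun x => g (itinerary f a M x) :=
    (measurable_of_finite g).comp (measurable_itinerary hf.measurable ha M)
  set cost : X → ℝ := fun x => -Real.log (guessWeight δ (g (itinerary f a M x)) (q x))
  have hcost : Integrable cost μ := integrable_comp_of_finite (hr.prodMk hq)
    fun v : β × β => -Real.log (guessWeight δ v.1 v.2)
  set guess : (Fin (n + M) → α) → Fin n → β := fun c i => g fun t => c ⟨i + t, by omega⟩
  have hguess (x : X) : -Real.log (∏ i, guessWeight δ (guess (itinerary f a (n + M) x) i)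
      (itinerary f q n x i)) = birkhoff f cost n x := by
    rw [Real.log_prod fun i _ => (guessWeight_pos hδ hδ1 _ _).ne', ← Finset.sum_neg_distrib,
      birkhoff, ← Fin.sum_univ_eq_sum_range fun i => cost (f^[i] x)]
    refine Finset.sum_congr rfl fun i _ => ?_
    simp only [cost, guess, itinerary_iterate (show (i : ℕ) + M ≤ n + M by omega)]
    rfl
  refine (shannonEntropy_le_add_integral_neg_log (measurable_itinerary hf.measurable hq n)
    (measurable_itinerary hf.measurable ha (n + M))
    (κ := fun c w => ∏ i, guessWeight δ (guess c i) (w i))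
    (fun c w => Finset.prod_pos fun i _ => guessWeight_pos hδ hδ1 _ _)
    fun c => (sum_prod_guessWeight δ (guess c)).le).trans ?_
  simp only [hguess, integral_birkhoff hf hcost]
  gcongr
  exact integral_neg_log_guessWeight_le hq hr hδ hδ1 hg

end Itinerary

section Generator

variable [MeasurableSpace X] {α β : Type*} [MeasurableSpace α] {f : X → X} {a : X → α}

/-- The labelling `a`, equivalently the partition of `X` into its fibres, generates the
`σ`-algebra of `X` under `f`: measurable sets are determined by the infinite itineraries. -/
def IsGenerator (f : X → X) (a : X → α) : Prop :=
  ‹MeasurableSpace X› = MeasurableSpace.comap (fun x (i : ℕ) => a (f^[i] x)) MeasurableSpace.pi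

theorem IsGenerator.measurable_infinite_itinerary (h : IsGenerator f a) :
    Measurable fun x (i : ℕ) => a (f^[i] x) := by
  intro S hS
  rw [h]
  exact ⟨S, hS, rfl⟩

theorem IsGenerator.measurable (h : IsGenerator f a) : Measurable a :=
  (measurable_pi_apply 0).comp h.measurable_infinite_itinerary

theorem IsGenerator.eventually_exists_symmDiff_lt (h : IsGenerator f a) (μ : Measure X)
    [IsFiniteMeasure μ] {s : Set X} (hs : MeasurableSet s) {ε : ENNReal} (hε : 0 < ε) :
    ∀ᶠ M in atTop, ∃ S : Set (Fin M → α), μ (symmDiff (itinerary f a M ⁻¹' S) s) < ε := by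
  have hword := h.measurable_infinite_itinerary
  obtain ⟨B, hB, rfl⟩ : ∃ B, MeasurableSet B ∧ (fun x (i : ℕ) => a (f^[i] x)) ⁻¹' B = s := by
    rw [h] at hs
    exact hs
  obtain ⟨C, hC, hCB⟩ := exists_measure_symmDiff_lt_of_generateFrom_isSetRing
    (μ := μ.map fun x (i : ℕ) => a (f^[i] x)) (isSetRing_measurableCylinders (α := fun _ => α))
    ⟨{univ}, countable_singleton _, singleton_subset_iff.mpr (univ_mem_measurableCylinders _),
      by simp only [sUnion_singleton, compl_univ, measure_empty]⟩
    generateFrom_measurableCylinders.symm hB hε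
  obtain ⟨t, S, -, rfl⟩ := (mem_measurableCylinders C).mp hC
  rw [Measure.map_apply hword ((MeasurableSet.of_mem_measurableCylinders hC).symmDiff hB)] at hCB
  filter_upwards [eventually_gt_atTop (t.sup id)] with M hM
  have ht (i : t) : (i : ℕ) < M := (Finset.le_sup (f := id) i.2).trans_lt hM
  exact ⟨{w | (fun i : t => w ⟨i, ht i⟩) ∈ S}, hCB⟩

theorem IsGenerator.exists_predictor [Finite β] [MeasurableSpace β] [MeasurableSingletonClass β]
    (h : IsGenerator f a) (μ : Measure X) [IsProbabilityMeasure μ] {q : X → β}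
    (hq : Measurable q) {δ : ℝ} (hδ : 0 < δ) :
    ∃ (M : ℕ) (g : (Fin M → α) → β), μ.real {x | q x ≠ g (itinerary f a M x)} ≤ δ := by
  have := Fintype.ofFinite β
  have : Nonempty β := (nonempty_of_isProbabilityMeasure μ).map q
  have hδβ : 0 < δ / Fintype.card β := by positivity
  obtain ⟨M, hM⟩ := (eventually_all.mpr fun v => h.eventually_exists_symmDiff_lt μ
    (hq (measurableSet_singleton v)) (ENNReal.ofReal_pos.mpr hδβ)).exists
  choose S hS using hM
  refine ⟨M, fun w => Classical.epsilon fun v => w ∈ S v, ?_⟩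
  have hsub : {x | q x ≠ Classical.epsilon fun v => itinerary f a M x ∈ S v} ⊆
      ⋃ v, symmDiff (itinerary f a M ⁻¹' S v) (q ⁻¹' {v}) := by
    intro x hx
    contrapose! hx
    have hS_iff (v : β) : itinerary f a M x ∈ S v ↔ q x = v := by
      have hv := fun hxv => hx (mem_iUnion.mpr ⟨v, hxv⟩)
      rw [Set.mem_symmDiff] at hv
      simp only [mem_preimage, mem_singleton_iff] at hv
      tauto
    have := Classical.epsilon_spec (p := fun v => itinerary f a M x ∈ S v) ⟨q x, (hS_iff _).mpr rfl⟩
    exact not_not_intro ((hS_iff _).mp this)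
  calc μ.real {x | q x ≠ Classical.epsilon fun v => itinerary f a M x ∈ S v}
      ≤ μ.real (⋃ v, symmDiff (itinerary f a M ⁻¹' S v) (q ⁻¹' {v})) := measureReal_mono hsub
    _ ≤ ∑ v, μ.real (symmDiff (itinerary f a M ⁻¹' S v) (q ⁻¹' {v})) :=
        measureReal_iUnion_fintype_le _
    _ ≤ ∑ _v : β, δ / Fintype.card β :=
        Finset.sum_le_sum fun v _ => (ENNReal.toReal_lt_of_lt_ofReal (hS v)).le
    _ = δ := by
        simp only [Finset.sum_const, Finset.card_univ, nsmul_eq_mul]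
        field_simp

end Generator

section KolmogorovSinai

theorem tendsto_div_iInf_of_subadditive {u : ℕ → ℝ} (hu : Subadditive u) (h0 : ∀ n, 0 ≤ u n) :
    Tendsto (fun n => u n / n) atTop (𝓝 (⨅ n : ℕ, ((n : ℝ) + 1)⁻¹ * u (n + 1))) := by
  have hbdd : BddBelow (range fun n => u n / n) :=
    ⟨0, forall_mem_range.mpr fun n => div_nonneg (h0 n) n.cast_nonneg⟩
  have hlim : ⨅ n : ℕ, ((n : ℝ) + 1)⁻¹ * u (n + 1) = hu.lim := by
    have hterm (n : ℕ) : ((n : ℝ) + 1)⁻¹ * u (n + 1) = u (n + 1) / (n + 1 : ℕ) := by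
      rw [Nat.cast_succ, inv_mul_eq_div]
    simp only [hterm]
    refine le_antisymm (ge_of_tendsto (hu.tendsto_lim hbdd) ?_)
      (le_ciInf fun n => hu.lim_le_div hbdd n.succ_ne_zero)
    filter_upwards [eventually_ne_atTop 0] with n hn
    obtain ⟨m, rfl⟩ := Nat.exists_eq_succ_of_ne_zero hn
    exact ciInf_le (hbdd.mono (range_comp_subset_range Nat.succ fun n => u n / n)) m
  exact hlim ▸ hu.tendsto_lim hbdd

variable [MeasurableSpace X] {α β : Type*} [Fintype α] [Fintype β] {μ : Measure X} {f : X → X}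

/-- The entropy of `f` relative to the partition of `X` into the fibres of `a`. -/
noncomputable def entropyRate (μ : Measure X) (f : X → X) (a : X → α) : ℝ :=
  ⨅ n : ℕ, ((n : ℝ) + 1)⁻¹ * shannonEntropy μ (itinerary f a (n + 1))

theorem IsMeasPartition.exists_label {k : ℕ} {P : Fin k → Set X} (hP : IsMeasPartition P) :
    ∃ q : X → Fin k, Measurable q ∧ P = fun j => q ⁻¹' {j} := by
  obtain ⟨hmeas, hdisj, hcover⟩ := hP
  choose q hq using fun x => mem_iUnion.mp (hcover ▸ mem_univ x)
  have hfiber : P = fun j => q ⁻¹' {j} := by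
    funext j
    refine Subset.antisymm (fun x hx => ?_) fun x hx => hx ▸ hq x
    by_contra hne
    exact disjoint_left.mp (hdisj hne) (hq x) hx
  exact ⟨q, measurable_to_countable' fun j => congrFun hfiber j ▸ hmeas j, hfiber⟩

theorem isMeasPartition_fibers {k : ℕ} {q : X → Fin k} (hq : Measurable q) :
    IsMeasPartition fun j => q ⁻¹' {j} :=
  ⟨fun j => hq (measurableSet_singleton j), pairwise_disjoint_fiber q,
    eq_univ_of_forall fun x => mem_iUnion.mpr ⟨q x, rfl⟩⟩

theorem partitionEntropy_fibers {k : ℕ} (q : X → Fin k) (n : ℕ) :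
    partitionEntropy μ f (fun j => q ⁻¹' {j}) n = shannonEntropy μ (itinerary f q n) := by
  have hcell (w : Fin n → Fin k) :
      cellOf f (fun j => q ⁻¹' {j}) w = itinerary f q n ⁻¹' {w} := by
    ext x
    simp only [cellOf, itinerary, mem_iInter, mem_preimage, mem_singleton_iff, funext_iff]
  simp only [partitionEntropy, shannonEntropy, hcell, measureReal_def]

variable [IsProbabilityMeasure μ]

theorem coe_entropyRate (a : X → α) : (entropyRate μ f a : EReal) =
    ⨅ n : ℕ, ((((n : ℝ) + 1)⁻¹ * shannonEntropy μ (itinerary f a (n + 1)) : ℝ) : EReal) := by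
  refine EReal.coe_strictMono.monotone.map_ciInf_of_continuousAt
    continuous_coe_real_ereal.continuousAt ⟨0, forall_mem_range.mpr fun n => ?_⟩
  exact mul_nonneg (by positivity) (shannonEntropy_nonneg _)

theorem ksEntropy_eq_iSup_entropyRate : ksEntropy μ f =
    ⨆ (k : ℕ) (q : X → Fin k) (_ : Measurable q), (entropyRate μ f q : EReal) := by
  simp only [ksEntropy, coe_entropyRate]
  refine iSup_congr fun k => le_antisymm (iSup₂_le fun P hP => ?_) (iSup₂_le fun q hq => ?_)
  · obtain ⟨q, hq, rfl⟩ := hP.exists_label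
    simp only [partitionEntropy_fibers]
    exact le_iSup₂ (f := fun (q : X → Fin k) (_ : Measurable q) => ⨅ n : ℕ,
      ((((n : ℝ) + 1)⁻¹ * shannonEntropy μ (itinerary f q (n + 1)) : ℝ) : EReal)) q hq
  · refine le_iSup₂_of_le _ (isMeasPartition_fibers hq) ?_
    simp only [partitionEntropy_fibers, le_refl]

variable [MeasurableSpace α] [MeasurableSingletonClass α]
  [MeasurableSpace β] [MeasurableSingletonClass β]

theorem tendsto_entropyRate (hf : MeasurePreserving f μ μ) {a : X → α} (ha : Measurable a) :
    Tendsto (fun n : ℕ => shannonEntropy μ (itinerary f a n) / n) atTop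
      (𝓝 (entropyRate μ f a)) :=
  tendsto_div_iInf_of_subadditive (subadditive_shannonEntropy_itinerary hf ha)
    fun _ => shannonEntropy_nonneg _

theorem IsGenerator.entropyRate_le_add_guessCost (hf : MeasurePreserving f μ μ) {a : X → α}
    (ha : IsGenerator f a) {q : X → β} (hq : Measurable q) {δ : ℝ} (hδ : 0 < δ) (hδ1 : δ < 1) :
    entropyRate μ f q ≤ entropyRate μ f a + guessCost (Fintype.card β) δ := by
  obtain ⟨M, g, hg⟩ := ha.exists_predictor μ hq hδ
  have hlim : Tendsto (fun n : ℕ => shannonEntropy μ (itinerary f a n) / n +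
      shannonEntropy μ (itinerary f a M) / n + guessCost (Fintype.card β) δ) atTop
      (𝓝 (entropyRate μ f a + 0 + guessCost (Fintype.card β) δ)) :=
    ((tendsto_entropyRate hf ha.measurable).add
      (tendsto_const_nhds.div_atTop tendsto_natCast_atTop_atTop)).add_const _
  rw [add_zero] at hlim
  refine le_of_tendsto_of_tendsto (tendsto_entropyRate hf hq) hlim ?_
  filter_upwards [eventually_gt_atTop 0] with n hn
  have hn : (0 : ℝ) < n := Nat.cast_pos.mpr hn
  rw [← add_div, div_add' _ _ _ hn.ne', mul_comm (guessCost _ _)]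
  gcongr
  exact (shannonEntropy_itinerary_le hf ha.measurable hq hδ hδ1 hg n).trans
    (add_le_add_left (subadditive_shannonEntropy_itinerary hf ha.measurable n M) _)

theorem IsGenerator.entropyRate_le (hf : MeasurePreserving f μ μ) {a : X → α}
    (ha : IsGenerator f a) {q : X → β} (hq : Measurable q) :
    entropyRate μ f q ≤ entropyRate μ f a := by
  have hlim := (tendsto_guessCost (Fintype.card β)).const_add (entropyRate μ f a)
  rw [add_zero] at hlim
  refine ge_of_tendsto hlim ?_
  filter_upwards [Ioo_mem_nhdsGT (zero_lt_one' ℝ)] with δ hδ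
    using ha.entropyRate_le_add_guessCost hf hq hδ.1 hδ.2

theorem IsGenerator.ksEntropy_eq {k : ℕ} (hf : MeasurePreserving f μ μ) {a : X → Fin k}
    (ha : IsGenerator f a) : ksEntropy μ f = entropyRate μ f a := by
  rw [ksEntropy_eq_iSup_entropyRate]
  refine le_antisymm (iSup_le fun l => iSup₂_le fun q hq => ?_) ?_
  · exact EReal.coe_le_coe_iff.mpr (ha.entropyRate_le hf hq)
  · exact le_iSup_of_le k (le_iSup₂_of_le a ha.measurable le_rfl)

end KolmogorovSinai

section Pressure

theorem mul_le_birkhoff {f : X → X} {ψ : X → ℝ} {c : ℝ} (hc : ∀ x, c ≤ ψ x) (n : ℕ) (x : X) :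
    n * c ≤ birkhoff f ψ n x := by
  simpa only [birkhoff, Finset.card_range, nsmul_eq_mul] using
    Finset.card_nsmul_le_sum (Finset.range n) (fun i => ψ (f^[i] x)) c fun i _ => hc _

theorem birkhoff_le_mul {f : X → X} {φ : X → ℝ} {c : ℝ} (hc : ∀ x, φ x ≤ c) (n : ℕ) (x : X) :
    birkhoff f φ n x ≤ n * c := by
  simpa only [birkhoff, Finset.card_range, nsmul_eq_mul] using
    Finset.sum_le_card_nsmul (Finset.range n) (fun i => φ (f^[i] x)) c fun i _ => hc _

variable {f : X → X} {φ ψ : X → ℝ} {c C T ε : ℝ}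

theorem le_div_of_mem_STset (hc : 0 < c) (hψ : ∀ x, c ≤ ψ x) {n : ℕ} (hn : n ∈ STset f ψ T) :
    n ≤ T / c := by
  obtain ⟨x, hx, -⟩ := hn
  exact (le_div_iff₀ hc).mpr ((mul_le_birkhoff hψ n x).trans hx)

theorem exists_mem_Xset (hc : 0 < c) (hψ : ∀ x, c ≤ ψ x) (hT : 0 ≤ T) (x : X) :
    ∃ n, x ∈ Xset f ψ T n := by
  classical
  have hex : ∃ n, T < birkhoff f ψ n x := by
    obtain ⟨n, hn⟩ := exists_nat_gt (T / c)
    exact ⟨n, ((div_lt_iff₀ hc).mp hn).trans_le (mul_le_birkhoff hψ n x)⟩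
  have hfirst : T < birkhoff f ψ (Nat.find hex) x := Nat.find_spec hex
  have hne : Nat.find hex ≠ 0 := by
    intro h0
    rw [h0, birkhoff, Finset.sum_range_zero] at hfirst
    exact hfirst.not_ge hT
  obtain ⟨n, hn⟩ := Nat.exists_eq_succ_of_ne_zero hne
  rw [hn] at hfirst
  exact ⟨n, not_lt.mp (Nat.find_min hex (by omega)), hfirst⟩

theorem tsum_indicator_STset (hc : 0 < c) (hψ : ∀ x, c ≤ ψ x) (u : ℕ → ℝ) :
    ∑' n, (STset f ψ T).indicator u n =
      ∑ n ∈ Finset.range (⌊T / c⌋₊ + 1), (STset f ψ T).indicator u n :=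
  tsum_eq_sum fun _ hn => indicator_of_notMem (fun hmem => hn (Finset.mem_range_succ_iff.mpr
    (Nat.le_floor (le_div_of_mem_STset hc hψ hmem)))) _

theorem sum_exp_birkhoff_le {κ τ : ℝ} (hφ : ∀ x, φ x ≤ C) {n : ℕ} {F : Finset X}
    (hF : F.card ≤ Real.exp (n * κ + τ)) :
    ∑ x ∈ F, Real.exp (birkhoff f φ n x) ≤ Real.exp (n * (κ + C) + τ) :=
  calc ∑ x ∈ F, Real.exp (birkhoff f φ n x)
      ≤ F.card • Real.exp (n * C) :=
        Finset.sum_le_card_nsmul _ _ _ fun x _ => Real.exp_le_exp.mpr (birkhoff_le_mul hφ n x)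
    _ = F.card * Real.exp (n * C) := nsmul_eq_mul _ _
    _ ≤ Real.exp (n * κ + τ) * Real.exp (n * C) := by gcongr
    _ = Real.exp (n * (κ + C) + τ) := by
        rw [← Real.exp_add]
        ring_nf

variable [MetricSpace X]

/-- Finite exponential growth of the spanning sets of `f`: at every scale they can be chosen with
cardinality of exponential order `κ`, which is required to be independent of the scale. -/
def HasFiniteSpanningGrowth (f : X → X) (κ : ℝ) : Prop :=
  ∀ ε > 0, ∃ τ : ℝ, ∀ n, ∃ F : Finset X,
    IsSpanningSet f n ε univ F ∧ F.card ≤ Real.exp (n * κ + τ)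

theorem exp_le_tsum_of_isSpanningSet [Nonempty X] (hc : 0 < c) (hψ : ∀ x, c ≤ ψ x)
    (hφ : ∀ x, |φ x| ≤ C) (hT : 0 ≤ T) {F : ℕ → Finset X}
    (hF : ∀ n ∈ STset f ψ T, IsSpanningSet f n ε (Xset f ψ T n) (F n)) :
    Real.exp (-(T / c * C)) ≤ ∑' n : ℕ, (STset f ψ T).indicator
      (fun n => ∑ x ∈ F n, Real.exp (birkhoff f φ n x)) n := by
  set u : ℕ → ℝ := fun n => ∑ x ∈ F n, Real.exp (birkhoff f φ n x)
  have hu (n : ℕ) : 0 ≤ u n := Finset.sum_nonneg fun _ _ => (Real.exp_pos _).le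
  obtain ⟨x⟩ := ‹Nonempty X›
  obtain ⟨n, hn⟩ := exists_mem_Xset (f := f) hc hψ hT x
  have hnS : n ∈ STset f ψ T := ⟨x, hn⟩
  have hnT := le_div_of_mem_STset hc hψ hnS
  obtain ⟨y, hy, -⟩ := hF n hnS x hn
  have hC : 0 ≤ C := (abs_nonneg _).trans (hφ x)
  calc Real.exp (-(T / c * C)) ≤ Real.exp (n * -C) := by
        rw [mul_neg]
        gcongr
    _ ≤ Real.exp (birkhoff f φ n y) :=
        Real.exp_le_exp.mpr (mul_le_birkhoff (fun x => neg_le_of_abs_le (hφ x)) n y)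
    _ ≤ u n := Finset.single_le_sum (f := fun x => Real.exp (birkhoff f φ n x))
        (fun _ _ => (Real.exp_pos _).le) hy
    _ = (STset f ψ T).indicator u n := (indicator_of_mem hnS u).symm
    _ ≤ ∑ n ∈ Finset.range (⌊T / c⌋₊ + 1), (STset f ψ T).indicator u n :=
        Finset.single_le_sum (f := (STset f ψ T).indicator u)
          (fun _ _ => indicator_nonneg (fun n _ => hu n) _)
          (Finset.mem_range_succ_iff.mpr (Nat.le_floor hnT))
    _ = ∑' n, (STset f ψ T).indicator u n := (tsum_indicator_STset hc hψ u).symm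

theorem exp_le_Qspan [Nonempty X] {κ : ℝ} (hf : HasFiniteSpanningGrowth f κ) (hc : 0 < c)
    (hψ : ∀ x, c ≤ ψ x) (hφ : ∀ x, |φ x| ≤ C) (hT : 0 ≤ T) (hε : 0 < ε) :
    Real.exp (-(T / c * C)) ≤ Qspan f φ ψ T ε := by
  obtain ⟨τ, hτ⟩ := hf ε hε
  choose F hF _ using hτ
  refine le_csInf ⟨_, F, fun n _ y _ => hF n y (mem_univ y), rfl⟩ ?_
  rintro r ⟨G, hG, rfl⟩
  exact exp_le_tsum_of_isSpanningSet hc hψ hφ hT hG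

theorem Qspan_le_exp {κ τ : ℝ} (hκ : 0 ≤ κ) (hc : 0 < c) (hψ : ∀ x, c ≤ ψ x) (hC : 0 ≤ C)
    (hφ : ∀ x, φ x ≤ C) (hT : 0 ≤ T) (hτ : ∀ n : ℕ, ∃ F : Finset X,
      IsSpanningSet f n ε univ F ∧ F.card ≤ Real.exp (n * κ + τ)) :
    Qspan f φ ψ T ε ≤ Real.exp (T / c * (1 + κ + C) + τ) := by
  choose F hF hcard using hτ
  set u : ℕ → ℝ := fun n => ∑ x ∈ F n, Real.exp (birkhoff f φ n x)
  have hterm (n : ℕ) : (STset f ψ T).indicator u n ≤ Real.exp (T / c * (κ + C) + τ) := by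
    by_cases hn : n ∈ STset f ψ T
    · have hnT := le_div_of_mem_STset hc hψ hn
      rw [indicator_of_mem hn]
      refine (sum_exp_birkhoff_le hφ (hcard n)).trans ?_
      gcongr
    · rw [indicator_of_notMem hn]
      positivity
  have hTc : 0 ≤ T / c := by positivity
  calc Qspan f φ ψ T ε ≤ ∑' n, (STset f ψ T).indicator u n := by
        refine csInf_le ⟨0, ?_⟩ ⟨F, fun n _ y _ => hF n y (mem_univ y), rfl⟩
        rintro r ⟨G, -, rfl⟩
        exact tsum_nonneg fun n => indicator_nonneg
          (fun _ _ => Finset.sum_nonneg fun _ _ => (Real.exp_pos _).le) n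
    _ = ∑ n ∈ Finset.range (⌊T / c⌋₊ + 1), (STset f ψ T).indicator u n :=
        tsum_indicator_STset hc hψ u
    _ ≤ (⌊T / c⌋₊ + 1 : ℝ) * Real.exp (T / c * (κ + C) + τ) := by
        simpa using Finset.sum_le_card_nsmul (Finset.range (⌊T / c⌋₊ + 1)) _ _ fun n _ => hterm n
    _ ≤ Real.exp (T / c) * Real.exp (T / c * (κ + C) + τ) := by
        gcongr
        linarith [Real.add_one_le_exp (T / c), Nat.floor_le hTc]
    _ = Real.exp (T / c * (1 + κ + C) + τ) := by
        rw [← Real.exp_add]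
        ring_nf

theorem exists_inducedPressure_eq_coe [Nonempty X] {κ : ℝ} (hκ : 0 ≤ κ)
    (hf : HasFiniteSpanningGrowth f κ) (hφ : ∃ C, ∀ x, |φ x| ≤ C) (hψ : ∃ c > 0, ∀ x, c ≤ ψ x) :
    ∃ p : ℝ, inducedPressure f φ ψ = p := by
  obtain ⟨C, hC⟩ := hφ
  obtain ⟨c, hc, hcψ⟩ := hψ
  have hC0 : 0 ≤ C := (abs_nonneg _).trans (hC (Classical.arbitrary X))
  have hlow : ((-(C / c) : ℝ) : EReal) ≤ inducedPressure f φ ψ := by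
    refine le_iSup₂_of_le 1 one_pos (le_limsup_of_frequently_le (Eventually.frequently ?_))
    filter_upwards [eventually_gt_atTop 0] with T hT
    have hQ := exp_le_Qspan hf hc hcψ hC hT.le one_pos
    rw [EReal.coe_le_coe_iff, le_inv_mul_iff₀ hT]
    calc T * -(C / c) = -(T / c * C) := by ring
      _ ≤ Real.log (Qspan f φ ψ T 1) :=
          (Real.le_log_iff_exp_le ((Real.exp_pos _).trans_le hQ)).mpr hQ
  have hup : inducedPressure f φ ψ ≤ (((1 + κ + C) / c + 1 : ℝ) : EReal) := by
    refine iSup₂_le fun ε hε => limsup_le_of_le (by isBoundedDefault) ?_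
    obtain ⟨τ, hτ⟩ := hf ε hε
    filter_upwards [eventually_gt_atTop 0, eventually_ge_atTop τ] with T hT hTτ
    have hQ := Qspan_le_exp hκ hc hcψ hC0 (fun x => le_of_abs_le (hC x)) hT.le hτ
    have hQ0 : 0 < Qspan f φ ψ T ε :=
      (Real.exp_pos _).trans_le (exp_le_Qspan hf hc hcψ hC hT.le hε)
    rw [EReal.coe_le_coe_iff, inv_mul_le_iff₀ hT]
    calc Real.log (Qspan f φ ψ T ε) ≤ T / c * (1 + κ + C) + τ :=
          (Real.log_le_iff_le_exp hQ0).mpr hQ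
      _ ≤ T / c * (1 + κ + C) + T := by gcongr
      _ = T * ((1 + κ + C) / c + 1) := by ring
  exact ⟨_, (EReal.coe_toReal (ne_top_of_le_ne_top (EReal.coe_ne_top _) hup)
    (ne_bot_of_le_ne_bot (EReal.coe_ne_bot _) hlow)).symm⟩

end Pressure

section Shift

variable {k : ℕ} (A : Fin k → Fin k → Bool)

instance : BorelSpace (SigmaA A) := ⟨rfl⟩

instance : CompactSpace (SigmaA A) := by
  have hclosed : IsClosed {ω : ℕ → Fin k | ∀ n : ℕ, A (ω n) (ω (n + 1)) = true} := by
    rw [Set.ofPred_forall]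
    refine isClosed_iInter fun n => isClosed_eq ?_ continuous_const
    have hA : Continuous fun p : Fin k × Fin k => A p.1 p.2 := continuous_of_discreteTopology
    have hpair : Continuous fun ω : ℕ → Fin k => (ω n, ω (n + 1)) :=
      (continuous_apply n).prodMk (continuous_apply (n + 1))
    exact hA.comp hpair
  exact isCompact_iff_compactSpace.mp hclosed.isCompact

theorem iterate_shiftMap_coord (i j : ℕ) (ω : SigmaA A) :
    ((shiftMap A)^[i] ω).1 j = ω.1 (j + i) := by
  induction i generalizing ω with
  | zero => rfl
  | succ i ih =>
    rw [Function.iterate_succ_apply, ih]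
    exact congrArg ω.1 (add_assoc j i 1)

variable {A}

theorem SigmaA.dist_le_iff {m : ℕ} {x y : SigmaA A} :
    dist x y ≤ (1 / 2) ^ m ↔ ∀ i < m, x.1 i = y.1 i := by
  rw [show dist x y = dist x.1 y.1 from rfl, ← PiNat.mem_cylinder_iff_dist_le]
  rfl

/-- The initial letter, which labels the partition of `Σ_A` into the cylinders of length one. -/
def SigmaA.head (ω : SigmaA A) : Fin k :=
  ω.1 0

theorem itinerary_head_apply {n : ℕ} (ω : SigmaA A) (i : Fin n) :
    itinerary (shiftMap A) SigmaA.head n ω i = ω.1 i := by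
  simp only [itinerary, SigmaA.head, iterate_shiftMap_coord, zero_add]

theorem cylinderSet_eq_preimage {n : ℕ} (w : Fin n → Fin k) :
    cylinderSet A w = itinerary (shiftMap A) SigmaA.head n ⁻¹' {w} := by
  ext ω
  simp only [cylinderSet, mem_ofPred_eq, mem_preimage, mem_singleton_iff, funext_iff,
    itinerary_head_apply]

theorem isGenerator_head : IsGenerator (shiftMap A) SigmaA.head := by
  have hcoord : (fun (ω : SigmaA A) (i : ℕ) => SigmaA.head ((shiftMap A)^[i] ω)) =
      fun ω => ω.1 := by
    funext ω i
    simp only [SigmaA.head, iterate_shiftMap_coord, zero_add]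
  have hpi : (MeasurableSpace.pi : MeasurableSpace (ℕ → Fin k)) = borel _ :=
    BorelSpace.measurable_eq
  rw [IsGenerator, hcoord, hpi]
  exact borel_comap

theorem dynDist_shiftMap_le {n m : ℕ} {x y : SigmaA A}
    (h : itinerary (shiftMap A) SigmaA.head (n + m) x =
      itinerary (shiftMap A) SigmaA.head (n + m) y) :
    dynDist (shiftMap A) n x y ≤ (1 / 2) ^ m := by
  refine Real.iSup_le (fun i => SigmaA.dist_le_iff.mpr fun j hj => ?_) (by positivity)
  have hij := congrFun h ⟨j + i, by omega⟩
  rwa [itinerary_head_apply, itinerary_head_apply, ← iterate_shiftMap_coord,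
    ← iterate_shiftMap_coord] at hij

theorem hasFiniteSpanningGrowth_shiftMap : HasFiniteSpanningGrowth (shiftMap A) (Real.log k) := by
  classical
  intro ε hε
  obtain ⟨m, hm⟩ := exists_pow_lt_of_lt_one hε one_half_lt_one
  refine ⟨m * Real.log k, fun n => ?_⟩
  rcases isEmpty_or_nonempty (SigmaA A) with hA | hA
  · refine ⟨∅, fun y => isEmptyElim y, ?_⟩
    simpa only [Finset.card_empty, Nat.cast_zero] using (Real.exp_pos _).le
  set word := itinerary (shiftMap A) SigmaA.head (n + m)
  refine ⟨Finset.univ.image (Function.invFun word), fun y _ => ⟨_, Finset.mem_image_of_mem _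
    (Finset.mem_univ (word y)), ?_⟩, ?_⟩
  · exact (dynDist_shiftMap_le (Function.invFun_eq ⟨y, rfl⟩)).trans hm.le
  calc ((Finset.univ.image (Function.invFun word)).card : ℝ) ≤ (k : ℝ) ^ (n + m) := by
        exact_mod_cast Finset.card_image_le.trans (by simp)
    _ ≤ Real.exp (Real.log k) ^ (n + m) := by
        gcongr
        exact Real.le_exp_log _
    _ = Real.exp (n * Real.log k + m * Real.log k) := by
        rw [← Real.exp_nat_mul, Nat.cast_add, add_mul]

end Shift

section GibbsMeasure

variable {k : ℕ} {A : Fin k → Fin k → Bool} {μ : Measure (SigmaA A)} [IsProbabilityMeasure μ]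
  {φ ψ : SigmaA A → ℝ} {K : ℝ}

theorem IsGibbsMeasure.pos (hG : IsGibbsMeasure A φ ψ μ K) : 0 < K := by
  obtain ⟨ω⟩ := nonempty_of_isProbabilityMeasure μ
  have hcyl : cylinderSet A (Fin.elim0 : Fin 0 → Fin k) = univ :=
    eq_univ_of_forall fun _ i => i.elim0
  refine lt_of_lt_of_le ?_ (hG 0 Fin.elim0 ω fun i => i.elim0).2
  rw [hcyl, measure_univ, ENNReal.toReal_one]
  positivity

theorem IsGibbsMeasure.abs_information_sub_le (hG : IsGibbsMeasure A φ ψ μ K) (n : ℕ)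
    (ω : SigmaA A) :
    |information μ (itinerary (shiftMap A) SigmaA.head n) ω -
      ((inducedPressure (shiftMap A) φ ψ).toReal * birkhoff (shiftMap A) ψ n ω -
        birkhoff (shiftMap A) φ n ω)| ≤ Real.log K := by
  obtain ⟨hlow, hup⟩ := hG n (itinerary (shiftMap A) SigmaA.head n ω) ω
    fun i => (itinerary_head_apply ω i).symm
  rw [cylinderSet_eq_preimage, ← measureReal_def] at hlow hup
  have hratio := (inv_pos.mpr hG.pos).trans_le hlow
  have hcyl := (div_pos_iff_of_pos_right (Real.exp_pos _)).mp hratio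
  have hloglow := Real.log_le_log (inv_pos.mpr hG.pos) hlow
  have hlogup := Real.log_le_log hratio hup
  rw [Real.log_div hcyl.ne' (Real.exp_pos _).ne', Real.log_exp] at hloglow hlogup
  rw [Real.log_inv] at hloglow
  rw [information, abs_le]
  constructor <;> linarith

theorem IsGibbsMeasure.abs_shannonEntropy_sub_le (hσ : MeasurePreserving (shiftMap A) μ μ)
    (hφ : Integrable φ μ) (hψ : Integrable ψ μ) (hG : IsGibbsMeasure A φ ψ μ K) (n : ℕ) :
    |shannonEntropy μ (itinerary (shiftMap A) SigmaA.head n) -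
      n * ((inducedPressure (shiftMap A) φ ψ).toReal * ∫ ω, ψ ω ∂μ - ∫ ω, φ ω ∂μ)| ≤
      Real.log K := by
  have hword := measurable_itinerary hσ.measurable (isGenerator_head (A := A)).measurable n
  set p := (inducedPressure (shiftMap A) φ ψ).toReal
  set S : SigmaA A → ℝ := fun ω => p * birkhoff (shiftMap A) ψ n ω - birkhoff (shiftMap A) φ n ω
  have hψn := (integrable_birkhoff hσ hψ n).const_mul p
  have hφn := integrable_birkhoff hσ hφ n
  have hSi : Integrable S μ := hψn.sub hφn
  have hS : ∫ ω, S ω ∂μ = n * (p * ∫ ω, ψ ω ∂μ - ∫ ω, φ ω ∂μ) := by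
    simp only [S]
    rw [integral_sub hψn hφn, integral_const_mul, integral_birkhoff hσ hψ, integral_birkhoff hσ hφ]
    ring
  rw [← integral_information hword, ← hS, ← integral_sub (integrable_information hword) hSi]
  have hbound : ∀ᵐ ω ∂μ, ‖information μ (itinerary (shiftMap A) SigmaA.head n) ω - S ω‖ ≤
      Real.log K := .of_forall (hG.abs_information_sub_le n)
  simpa only [Real.norm_eq_abs, probReal_univ, mul_one] using
    norm_integral_le_of_norm_le_const hbound

theorem IsGibbsMeasure.ksEntropy_eq (hσ : MeasurePreserving (shiftMap A) μ μ)
    (hφ : Integrable φ μ) (hψ : Integrable ψ μ) (hG : IsGibbsMeasure A φ ψ μ K) :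
    ksEntropy μ (shiftMap A) =
      ((inducedPressure (shiftMap A) φ ψ).toReal * ∫ ω, ψ ω ∂μ - ∫ ω, φ ω ∂μ : ℝ) := by
  set h := (inducedPressure (shiftMap A) φ ψ).toReal * ∫ ω, ψ ω ∂μ - ∫ ω, φ ω ∂μ
  have hlim : Tendsto (fun n : ℕ => shannonEntropy μ (itinerary (shiftMap A) SigmaA.head n) / n)
      atTop (𝓝 h) := by
    refine tendsto_iff_dist_tendsto_zero.mpr (squeeze_zero' (.of_forall fun _ => dist_nonneg) ?_
      (tendsto_const_nhds.div_atTop (a := Real.log K) tendsto_natCast_atTop_atTop))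
    filter_upwards [eventually_gt_atTop 0] with n hn
    have hn : (0 : ℝ) < n := Nat.cast_pos.mpr hn
    rw [Real.dist_eq, div_sub' hn.ne', abs_div, Nat.abs_cast]
    gcongr
    exact hG.abs_shannonEntropy_sub_le hσ hφ hψ n
  rw [isGenerator_head.ksEntropy_eq hσ,
    tendsto_nhds_unique (tendsto_entropyRate hσ isGenerator_head.measurable) hlim]

end GibbsMeasure

theorem stmt16_general {k : ℕ} {A : Fin k → Fin k → Bool} {φ ψ : SigmaA A → ℝ}
    {μ : Measure (SigmaA A)} [IsProbabilityMeasure μ] (hφ : AEStronglyMeasurable φ μ)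
    (hφb : ∃ C, ∀ ω, |φ ω| ≤ C) (hψ : Integrable ψ μ) (hψb : ∃ c > 0, ∀ ω, c ≤ ψ ω)
    (hinv : MeasurePreserving (shiftMap A) μ μ) {K : ℝ} (hGibbs : IsGibbsMeasure A φ ψ μ K) :
    IsEquilibriumMeasure (shiftMap A) φ ψ μ := by
  have : Nonempty (SigmaA A) := nonempty_of_isProbabilityMeasure μ
  obtain ⟨p, hp⟩ := exists_inducedPressure_eq_coe (Real.log_natCast_nonneg k)
    hasFiniteSpanningGrowth_shiftMap hφb hψb
  obtain ⟨C, hC⟩ := hφb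
  obtain ⟨c, hc, hcψ⟩ := hψb
  have hent := hGibbs.ksEntropy_eq hinv (.of_bound hφ C (.of_forall hC)) hψ
  have hψpos : 0 < ∫ ω, ψ ω ∂μ := by
    refine hc.trans_le ?_
    simpa using integral_mono (integrable_const c) hψ hcψ
  rw [IsEquilibriumMeasure, hent, hp, EReal.toReal_coe, ← EReal.coe_add, ← EReal.coe_mul,
    sub_add_cancel, mul_inv_cancel_right₀ hψpos.ne']

/-- a `σ`-invariant Gibbs measure for `ψ` and `φ` on a one-sided topological
Markov shift over a finite alphabet is an equilibrium measure for `ψ` and `φ`. -/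
theorem stmt16 {k : ℕ} (hk : 0 < k) (A : Fin k → Fin k → Bool)
    (φ ψ : SigmaA A → ℝ) (hφ : Continuous φ) (hψ : Continuous ψ)
    (hpos : ∀ ω, 0 < ψ ω)
    (μ : Measure (SigmaA A)) (hprob : IsProbabilityMeasure μ)
    (hinv : MeasurePreserving (shiftMap A) μ μ)
    (K : ℝ) (hK : 1 < K) (hGibbs : IsGibbsMeasure A φ ψ μ K) :
    IsEquilibriumMeasure (shiftMap A) φ ψ μ :=
  stmt16_general hφ.aestronglyMeasurable
    ((isCompact_univ.exists_bound_of_continuousOn hφ.continuousOn).imp fun _ h ω => h ω trivial)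
    (hψ.integrable_of_hasCompactSupport (.of_compactSpace ψ))
    ((isCompact_univ.exists_forall_le' hψ.continuousOn fun ω _ => hpos ω).imp
      fun _ h => ⟨h.1, fun ω => h.2 ω trivial⟩) hinv hGibbs
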